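/- Assume condition (D1) (A is increasing on [0,1]) and the equilibrium condition (E1). Then the cumulative distribution functions solving the stationary equation (1/2)∂²_x(A(F∞(x))) − ∂_x(B(F∞(x))) = 0 in the sense of distributions have a finite first moment if and only if condition (E2) holds, i.e., if and only if ∫₀^{1/2} a(u)u/(2|B(u)|) du + ∫_{1/2}^1 a(u)(1−u)/(2|B(u)|) du < +∞. -/

import Mathlib

open MeasureTheory Set Filter Topology
open scoped ENNReal

noncomputable section

/-- `primitive f u = ∫₀^u f(v) dv`. -/
def primitive (f : ℝ → ℝ) : ℝ → ℝ := fun u => ∫ v in (0:ℝ)..u, f v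

/-- Pseudo-inverse of a cdf: `F⁻¹(u) = inf {x | F x > u}`. -/
def pinv (F : ℝ → ℝ) (u : ℝ) : ℝ := sInf {x : ℝ | u < F x}

/-- `F` is the cumulative distribution function of a probability measure on `ℝ`. -/
def IsCDF (F : ℝ → ℝ) : Prop :=
  Monotone F ∧ (∀ x : ℝ, ContinuousWithinAt F (Set.Ici x) x) ∧
    Tendsto F atBot (nhds 0) ∧ Tendsto F atTop (nhds 1)

/-- `F` solves the stationary equation `(1/2) ∂ₓₓ (A(F)) - ∂ₓ (B(F)) = 0` in the sense
of distributions. -/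
def IsStationarySolution (A B : ℝ → ℝ) (F : ℝ → ℝ) : Prop :=
  ∀ φ : ℝ → ℝ, ContDiff ℝ (⊤ : ℕ∞) φ → HasCompactSupport φ →
    (1/2) * (∫ x : ℝ, A (F x) * deriv (deriv φ) x) + (∫ x : ℝ, B (F x) * deriv φ x) = 0

/-- `Ψ(u) = ∫_{1/2}^u a(v) / (2 B(v)) dv`. -/
def Psi (a b : ℝ → ℝ) (u : ℝ) : ℝ := ∫ v in (1/2:ℝ)..u, a v / (2 * primitive b v)

/-- The inverse of `Ψ`, extended by `1` above `lim_{u→1} Ψ(u)` and by `0` below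
`lim_{u→0} Ψ(u)` when these limits are finite. -/
def PsiInv (a b : ℝ → ℝ) (x : ℝ) : ℝ :=
  sSup {u : ℝ | u ∈ Set.Ioo (0:ℝ) 1 ∧ Psi a b u ≤ x}

/-!
With `A`, `B` the primitives of `a`, `b`, integrating the stationary equation twice against test
functions, and using that `B(F)` and the unit increments of `A(F)` vanish at `-∞`, turns it into
`A(F(y)) - A(F(x)) = ∫ₓʸ 2B(F(t)) dt`. Since `A` is injective on `[0, 1]`, such an `F` is
continuous. Near a level `u ∈ (0, 1)` the increments of `A` are equivalent to `2B(u)` times those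
of `Ψ`, so where `0 < F < 1` the equation `(A ∘ F)' = 2B(F)` says that `(Ψ ∘ F)' = 1`. Hence the
quantile functions of the solutions are translates of `Ψ`, and `Ψ` itself is attained by `PsiInv`.
All first moments are therefore finite exactly when `Ψ ∈ L¹(0, 1)`, and Tonelli's theorem rewrites
`∫₀¹ |Ψ|` as the sum of the two integrals in (E2).
-/

/-- The test functions `C_c^∞(ℝ)` of the theory of distributions on the real line. -/
def IsTestFunction (φ : ℝ → ℝ) : Prop :=
  ContDiff ℝ (⊤ : ℕ∞) φ ∧ HasCompactSupport φ

namespace IsTestFunction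

variable {f φ ψ η : ℝ → ℝ}

lemma continuous (hφ : IsTestFunction φ) : Continuous φ := hφ.1.continuous

lemma deriv (hφ : IsTestFunction φ) : IsTestFunction (deriv φ) :=
  ⟨(contDiff_infty_iff_deriv.1 hφ.1).2, hφ.2.deriv⟩

lemma hasDerivAt (hφ : IsTestFunction φ) (x : ℝ) : HasDerivAt φ (_root_.deriv φ x) x :=
  ((contDiff_infty_iff_deriv.1 hφ.1).1 x).hasDerivAt

lemma integrable (hφ : IsTestFunction φ) : Integrable φ :=
  hφ.continuous.integrable_of_hasCompactSupport hφ.2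

lemma integrable_mul (hφ : IsTestFunction φ) (hf : LocallyIntegrable f) :
    Integrable (fun x => f x * φ x) := by
  simpa [mul_comm] using hf.integrable_smul_left_of_hasCompactSupport hφ.continuous hφ.2

lemma integral_deriv (hφ : IsTestFunction φ) : ∫ x, _root_.deriv φ x = 0 :=
  integral_eq_zero_of_hasDerivAt_of_integrable hφ.hasDerivAt hφ.deriv.integrable hφ.integrable

lemma sub_const_mul (hφ : IsTestFunction φ) (hη : IsTestFunction η) (c : ℝ) :
    IsTestFunction (fun x => φ x - c * η x) :=
  ⟨hφ.1.sub (contDiff_const.mul hη.1), hφ.2.sub (hη.2.mul_left (f := fun _ => c))⟩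

lemma exists_integral_eq_one : ∃ η, IsTestFunction η ∧ ∫ x, η x = 1 :=
  let bump : ContDiffBump (0 : ℝ) := ⟨1, 2, one_pos, one_lt_two⟩
  ⟨bump.normed volume, ⟨bump.contDiff_normed, bump.hasCompactSupport_normed⟩, bump.integral_normed⟩

lemma exists_tsupport_subset_Ioo (hφ : IsTestFunction φ) (c : ℝ) :
    ∃ l r, c ∈ Ioo l r ∧ tsupport φ ⊆ Ioo l r := by
  obtain ⟨R, hR, hsub⟩ := hφ.2.isCompact.isBounded.subset_ball_lt 0 c
  rw [Real.ball_eq_Ioo] at hsub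
  exact ⟨c - R, c + R, ⟨by linarith, by linarith⟩, hsub⟩

lemma hasDerivAt_integral_Iic (hψ : IsTestFunction ψ) (x : ℝ) :
    HasDerivAt (fun y => ∫ t in Iic y, ψ t) (ψ x) x := by
  have hsplit (y : ℝ) : ∫ t in Iic y, ψ t = (∫ t in x..y, ψ t) + ∫ t in Iic x, ψ t := by
    rw [← intervalIntegral.integral_Iic_sub_Iic hψ.integrable.integrableOn
      hψ.integrable.integrableOn, sub_add_cancel]
  rw [funext hsplit]
  exact (hψ.continuous.integral_hasStrictDerivAt x x).hasDerivAt.add_const _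

lemma hasCompactSupport_integral_Iic (hψ : IsTestFunction ψ) (h0 : ∫ x, ψ x = 0) :
    HasCompactSupport (fun x => ∫ t in Iic x, ψ t) := by
  obtain ⟨l, r, -, hlr⟩ := hψ.exists_tsupport_subset_Ioo 0
  have hψ0 (x : ℝ) (hx : x ∉ Ioo l r) : ψ x = 0 :=
    image_eq_zero_of_notMem_tsupport fun h => hx (hlr h)
  refine HasCompactSupport.intro (isCompact_Icc (a := l) (b := r)) fun x hx => ?_
  rcases not_and_or.1 hx with hx | hx
  · exact setIntegral_eq_zero_of_forall_eq_zero fun t ht =>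
      hψ0 t fun h => hx (h.1.le.trans ht)
  · rw [setIntegral_eq_integral_of_forall_compl_eq_zero, h0]
    exact fun t ht => hψ0 t fun h => ht ((h.2.trans (not_le.1 hx)).le)

lemma exists_deriv_eq (hψ : IsTestFunction ψ) (h0 : ∫ x, ψ x = 0) :
    ∃ φ, IsTestFunction φ ∧ _root_.deriv φ = ψ := by
  have hderiv : _root_.deriv (fun x => ∫ t in Iic x, ψ t) = ψ :=
    funext fun x => (hψ.hasDerivAt_integral_Iic x).deriv
  refine ⟨_, ⟨contDiff_infty_iff_deriv.2 ⟨fun x => ?_, ?_⟩,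
    hψ.hasCompactSupport_integral_Iic h0⟩, hderiv⟩
  · exact (hψ.hasDerivAt_integral_Iic x).differentiableAt
  · rw [hderiv]
    exact hψ.1

lemma exists_deriv_eq_sub (hψ : IsTestFunction ψ) (hη : IsTestFunction η) (hη1 : ∫ x, η x = 1) :
    ∃ φ, IsTestFunction φ ∧ _root_.deriv φ = fun x => ψ x - (∫ t, ψ t) * η x := by
  refine (hψ.sub_const_mul hη _).exists_deriv_eq ?_
  rw [integral_sub hψ.integrable (hη.integrable.const_mul _), integral_const_mul, hη1]
  ring

lemma integral_mul_sub_const_mul (hφ : IsTestFunction φ) (hη : IsTestFunction η)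
    (hf : LocallyIntegrable f) (c : ℝ) :
    ∫ x, f x * (φ x - c * η x) = (∫ x, f x * φ x) - c * ∫ x, f x * η x := by
  rw [← integral_const_mul, ← integral_sub (hφ.integrable_mul hf)
    ((hη.integrable_mul hf).const_mul _)]
  exact integral_congr_ae (.of_forall fun x => by ring)

lemma integral_primitive_mul_deriv (hφ : IsTestFunction φ) (hf : LocallyIntegrable f) (c : ℝ) :
    ∫ x, (∫ t in c..x, f t) * _root_.deriv φ x = -∫ x, f x * φ x := by
  obtain ⟨l, r, hc, hlr⟩ := hφ.exists_tsupport_subset_Ioo c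
  have hφ0 (x : ℝ) (hx : x ∉ Ioo l r) : φ x = 0 :=
    image_eq_zero_of_notMem_tsupport fun h => hx (hlr h)
  have hprim : AbsolutelyContinuousOnInterval (fun x => ∫ t in c..x, f t) l r :=
    (hf.integrableOn_isCompact isCompact_uIcc).intervalIntegrable
      |>.absolutelyContinuousOnInterval_intervalIntegral
        (Icc_subset_uIcc (Ioo_subset_Icc_self hc))
  have hφ_ac : AbsolutelyContinuousOnInterval φ l r :=
    (hφ.1.of_le (mod_cast le_top)).contDiffOn.absolutelyContinuousOnInterval
  calc ∫ x, (∫ t in c..x, f t) * _root_.deriv φ x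
      = ∫ x in l..r, (∫ t in c..x, f t) * _root_.deriv φ x := by
        refine (intervalIntegral.integral_eq_integral_of_support_subset ?_).symm
        exact (Function.support_mul_subset_right _ _).trans
          ((support_deriv_subset.trans hlr).trans Ioo_subset_Ioc_self)
    _ = -∫ x in l..r, _root_.deriv (fun y => ∫ t in c..y, f t) x * φ x := by
        rw [hprim.integral_mul_deriv_eq_deriv_mul hφ_ac, hφ0 l left_notMem_Ioo,
          hφ0 r right_notMem_Ioo]
        ring
    _ = -∫ x in l..r, f x * φ x := by
        congr 1
        refine intervalIntegral.integral_congr_ae ?_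
        filter_upwards [LocallyIntegrable.ae_hasDerivAt_integral hf] with x hx _
        rw [(hx c).deriv]
    _ = -∫ x, f x * φ x := by
        rw [intervalIntegral.integral_eq_integral_of_support_subset]
        exact (Function.support_mul_subset_right _ _).trans
          ((subset_tsupport φ).trans (hlr.trans Ioo_subset_Ioc_self))

end IsTestFunction

section DuBoisReymond

variable {f : ℝ → ℝ}

lemma exists_ae_eq_const_of_integral_mul_deriv_eq_zero (hf : LocallyIntegrable f)
    (h : ∀ φ, IsTestFunction φ → ∫ x, f x * deriv φ x = 0) : ∃ c, ∀ᵐ x, f x = c := by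
  obtain ⟨η, hη, hη1⟩ := IsTestFunction.exists_integral_eq_one
  refine ⟨∫ x, f x * η x, ?_⟩
  have hzero : ∀ᵐ x, f x - ∫ x, f x * η x = 0 := by
    refine ae_eq_zero_of_integral_contDiff_smul_eq_zero
      (hf.sub (locallyIntegrable_const _)) fun ψ hψ hψc => ?_
    have hψ : IsTestFunction ψ := ⟨hψ, hψc⟩
    obtain ⟨φ, hφ, hφψ⟩ := hψ.exists_deriv_eq_sub hη hη1
    have hφ0 := h φ hφ
    rw [hφψ, hψ.integral_mul_sub_const_mul hη hf] at hφ0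
    simp only [smul_eq_mul, mul_sub]
    rw [integral_sub (by simpa only [mul_comm] using hψ.integrable_mul hf)
      (hψ.integrable.mul_const _), integral_mul_const]
    simpa only [mul_comm] using hφ0
  filter_upwards [hzero] with x hx using sub_eq_zero.1 hx

lemma exists_ae_eq_affine_of_integral_mul_deriv_deriv_eq_zero (hf : LocallyIntegrable f)
    (h : ∀ φ, IsTestFunction φ → ∫ x, f x * deriv (deriv φ) x = 0) :
    ∃ k c, ∀ᵐ x, f x = c + k * x := by
  obtain ⟨η, hη, hη1⟩ := IsTestFunction.exists_integral_eq_one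
  set k := -∫ x, f x * deriv η x
  have hfirst (ψ : ℝ → ℝ) (hψ : IsTestFunction ψ) :
      ∫ x, f x * deriv ψ x = -(k * ∫ x, ψ x) := by
    obtain ⟨φ, hφ, hφψ⟩ := hψ.exists_deriv_eq_sub hη hη1
    have hφ2 : deriv (deriv φ) = fun x => deriv ψ x - (∫ t, ψ t) * deriv η x :=
      funext fun x => hφψ ▸ ((hψ.hasDerivAt x).sub ((hη.hasDerivAt x).const_mul _)).deriv
    have hφ0 := h φ hφ
    rw [hφ2, hψ.deriv.integral_mul_sub_const_mul hη.deriv hf] at hφ0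
    linarith
  have hlin : LocallyIntegrable fun x : ℝ => k * x :=
    (continuous_const.mul continuous_id).locallyIntegrable
  obtain ⟨c, hc⟩ := exists_ae_eq_const_of_integral_mul_deriv_eq_zero (hf.sub hlin)
    fun ψ hψ => by
      have hparts := hψ.integral_primitive_mul_deriv (locallyIntegrable_const k) 0
      simp only [intervalIntegral.integral_const, smul_eq_mul, sub_zero, integral_const_mul]
        at hparts
      simp only [Pi.sub_apply, sub_mul]
      rw [integral_sub (hψ.deriv.integrable_mul hf) (hψ.deriv.integrable_mul hlin), hfirst ψ hψ]
      simp only [mul_comm k]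
      linarith
  exact ⟨k, c, by filter_upwards [hc] with x hx; simp only [Pi.sub_apply] at hx; linarith⟩

lemma eq_of_ae_eq_const {X : Type*} [TopologicalSpace X] [T2Space X] {g : ℝ → X} {c : X}
    (hg : ∀ x, ContinuousWithinAt g (Ici x) x)
    (h : ∀ᵐ x, g x = c) (x : ℝ) : g x = c := by
  set D := Ioi x ∩ {y | g y = c}
  have hx : x ∈ closure D :=
    closure_minimal ((Measure.dense_of_ae h).open_subset_closure_inter isOpen_Ioi)
      isClosed_closure (by rw [closure_Ioi]; exact self_mem_Ici)
  have := mem_closure_iff_nhdsWithin_neBot.1 hx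
  have hD : D ⊆ Ici x := inter_subset_left.trans Ioi_subset_Ici_self
  refine tendsto_nhds_unique ((hg x).mono hD) ?_
  exact tendsto_const_nhds.congr' (eventually_nhdsWithin_of_forall fun y hy => hy.2.symm)

end DuBoisReymond

section IntegratedEquation

variable {A B F G h : ℝ → ℝ}

lemma tendsto_intervalIntegral_add_one_atBot {E : Type*} [NormedAddCommGroup E]
    [NormedSpace ℝ E] {h : ℝ → E} (h0 : Tendsto h atBot (𝓝 0)) :
    Tendsto (fun x => ∫ t in x..(x + 1), h t) atBot (𝓝 0) := by
  rw [Metric.tendsto_nhds]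
  intro ε hε
  obtain ⟨N, hN⟩ := eventually_atBot.1 (Metric.tendsto_nhds.1 h0 (ε / 2) (half_pos hε))
  filter_upwards [eventually_le_atBot (N - 1)] with x hx
  have hbound : ‖∫ t in x..(x + 1), h t‖ ≤ ε / 2 * |x + 1 - x| :=
    intervalIntegral.norm_integral_le_of_norm_le_const fun t ht => by
      rw [uIoc_of_le (by linarith)] at ht
      simpa using (hN t (by linarith [ht.2])).le
  rw [dist_zero_right]
  rw [add_sub_cancel_left, abs_one, mul_one] at hbound
  linarith

lemma integral_sub_primitive_mul_deriv_deriv (hG : LocallyIntegrable G)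
    (hh : LocallyIntegrable h) {φ : ℝ → ℝ} (hφ : IsTestFunction φ) :
    ∫ x, (G x - ∫ t in (0 : ℝ)..x, h t) * deriv (deriv φ) x =
      (∫ x, G x * deriv (deriv φ) x) + ∫ x, h x * deriv φ x := by
  have hH : LocallyIntegrable fun x => ∫ t in (0 : ℝ)..x, h t :=
    (intervalIntegral.continuous_primitive (fun x y =>
      (hh.integrableOn_isCompact isCompact_uIcc).intervalIntegrable) 0).locallyIntegrable
  simp only [sub_mul]
  rw [integral_sub (hφ.deriv.deriv.integrable_mul hG) (hφ.deriv.deriv.integrable_mul hH),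
    hφ.deriv.integral_primitive_mul_deriv hh, sub_neg_eq_add]

lemma exists_sub_eq_intervalIntegral_add_mul (hG : LocallyIntegrable G) (hh : LocallyIntegrable h)
    (hGr : ∀ x, ContinuousWithinAt G (Ici x) x)
    (hweak : ∀ φ, IsTestFunction φ →
      (∫ x, G x * deriv (deriv φ) x) + ∫ x, h x * deriv φ x = 0) :
    ∃ k, ∀ x y, G y - G x = (∫ t in x..y, h t) + k * (y - x) := by
  have hinteg (x y : ℝ) : IntervalIntegrable h volume x y :=
    (hh.integrableOn_isCompact isCompact_uIcc).intervalIntegrable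
  have hH : Continuous fun x => ∫ t in (0 : ℝ)..x, h t :=
    intervalIntegral.continuous_primitive hinteg 0
  obtain ⟨k, c, hae⟩ := exists_ae_eq_affine_of_integral_mul_deriv_deriv_eq_zero
    (hG.sub hH.locallyIntegrable) fun φ hφ =>
      (integral_sub_primitive_mul_deriv_deriv hG hh hφ).trans (hweak φ hφ)
  have hconst (x : ℝ) : G x - (∫ t in (0 : ℝ)..x, h t) - k * x = c := by
    refine eq_of_ae_eq_const (g := fun x => G x - (∫ t in (0 : ℝ)..x, h t) - k * x)
      (fun x => ?_) ?_ x
    · exact ((hGr x).sub hH.continuousWithinAt).sub (by fun_prop)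
    · filter_upwards [hae] with x hx
      simp only [Pi.sub_apply] at hx
      rw [hx, add_sub_cancel_right]
  refine ⟨k, fun x y => ?_⟩
  rw [← intervalIntegral.integral_interval_sub_left (hinteg 0 y) (hinteg 0 x)]
  linarith [hconst x, hconst y]

lemma sub_eq_intervalIntegral_of_tendsto_atBot {l : ℝ} (hG : LocallyIntegrable G)
    (hh : LocallyIntegrable h) (hGr : ∀ x, ContinuousWithinAt G (Ici x) x)
    (hGl : Tendsto G atBot (𝓝 l)) (hh0 : Tendsto h atBot (𝓝 0))
    (hweak : ∀ φ, IsTestFunction φ →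
      (∫ x, G x * deriv (deriv φ) x) + ∫ x, h x * deriv φ x = 0) (x y : ℝ) :
    G y - G x = ∫ t in x..y, h t := by
  obtain ⟨k, hk⟩ := exists_sub_eq_intervalIntegral_add_mul hG hh hGr hweak
  -- Increments over unit intervals vanish at `-∞`, which forces the slope `k` to be zero.
  have hlim : Tendsto (fun x => G (x + 1) - G x - ∫ t in x..(x + 1), h t) atBot
      (𝓝 (l - l - 0)) :=
    ((hGl.comp (tendsto_atBot_add_const_right _ _ tendsto_id)).sub hGl).sub
      (tendsto_intervalIntegral_add_one_atBot hh0)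
  simp only [hk, add_sub_cancel_left, mul_one, sub_self] at hlim
  rw [hk, tendsto_nhds_unique tendsto_const_nhds hlim, zero_mul, add_zero]

namespace IsCDF

lemma mem_Icc (hF : IsCDF F) (x : ℝ) : F x ∈ Icc (0 : ℝ) 1 :=
  ⟨hF.1.le_of_tendsto hF.2.2.1 x, hF.1.ge_of_tendsto hF.2.2.2 x⟩

lemma locallyIntegrable_comp (hF : IsCDF F) (hA : ContinuousOn A (Icc 0 1)) :
    LocallyIntegrable (A ∘ F) := by
  have hmeas : Measurable (A ∘ F) :=
    (continuousOn_iff_continuous_domRestrict.1 hA).measurable.comp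
      (hF.1.measurable.subtype_mk (h := hF.mem_Icc))
  obtain ⟨C, hC⟩ := isCompact_Icc.exists_bound_of_continuousOn hA
  exact (memLp_top_of_bound hmeas.aestronglyMeasurable C
    (.of_forall fun x => hC _ (hF.mem_Icc x))).locallyIntegrable le_top

lemma continuousWithinAt_comp (hF : IsCDF F) (hA : ContinuousOn A (Icc 0 1)) (x : ℝ) :
    ContinuousWithinAt (A ∘ F) (Ici x) x :=
  (hA _ (hF.mem_Icc x)).comp (hF.2.1 x) fun y _ => hF.mem_Icc y

lemma tendsto_comp_atBot (hF : IsCDF F) (hA : ContinuousOn A (Icc 0 1)) :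
    Tendsto (A ∘ F) atBot (𝓝 (A 0)) :=
  (hA 0 (left_mem_Icc.2 zero_le_one)).tendsto.comp
    (tendsto_nhdsWithin_iff.2 ⟨hF.2.2.1, .of_forall hF.mem_Icc⟩)

end IsCDF

lemma IsCDF.isStationarySolution_iff (hF : IsCDF F) (hA : ContinuousOn A (Icc 0 1))
    (hB : ContinuousOn B (Icc 0 1)) (hB0 : B 0 = 0) :
    IsStationarySolution A B F ↔ ∀ x y, A (F y) - A (F x) = ∫ t in x..y, 2 * B (F t) := by
  have hAF := hF.locallyIntegrable_comp hA
  have hBF : LocallyIntegrable fun x => 2 * B (F x) := (hF.locallyIntegrable_comp hB).smul (2 : ℝ)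
  have hdouble (φ : ℝ → ℝ) : ∫ x, 2 * B (F x) * deriv φ x = 2 * ∫ x, B (F x) * deriv φ x := by
    simp only [mul_assoc, integral_const_mul]
  constructor
  · refine fun hsol => sub_eq_intervalIntegral_of_tendsto_atBot hAF hBF
      (hF.continuousWithinAt_comp hA) (hF.tendsto_comp_atBot hA) ?_ fun φ hφ => ?_
    · simpa [hB0] using (hF.tendsto_comp_atBot hB).const_mul 2
    · have := hsol φ hφ.1 hφ.2
      simp only [hdouble]
      linarith
  · intro hinteg φ hφ hφc
    have hφ : IsTestFunction φ := ⟨hφ, hφc⟩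
    have hsum := integral_sub_primitive_mul_deriv_deriv hAF hBF hφ
    have hconst (x : ℝ) : A (F x) - ∫ t in (0 : ℝ)..x, 2 * B (F t) = A (F 0) := by
      rw [← hinteg, sub_sub_cancel]
    simp only [Function.comp_apply, hconst, integral_const_mul, hφ.deriv.integral_deriv, hdouble]
      at hsum
    linarith

end IntegratedEquation

section LocalAsymptotics

open Asymptotics

lemma intervalIntegrable_of_locallyIntegrableOn {E : Type*} [NormedAddCommGroup E] {f : ℝ → E}
    {s : Set ℝ} {u v : ℝ} (hf : LocallyIntegrableOn f s) (huv : uIcc u v ⊆ s) :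
    IntervalIntegrable f volume u v :=
  (hf.integrableOn_compact_subset huv isCompact_uIcc).intervalIntegrable

lemma isLittleO_integral_mul_sub {α κ : ℝ → ℝ} {s : Set ℝ} {u : ℝ} (hs : s ∈ 𝓝 u)
    (hα : LocallyIntegrableOn α s) (hα0 : ∀ v ∈ s, 0 ≤ α v)
    (hακ : LocallyIntegrableOn (fun v => α v * κ v) s) (hκ : ContinuousAt κ u) :
    (fun v => (∫ t in u..v, α t * κ t) - κ u * ∫ t in u..v, α t) =o[𝓝 u]
      fun v => ∫ t in u..v, α t := by
  refine isLittleO_iff.2 fun ε hε => ?_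
  obtain ⟨δ, hδ, hball⟩ := Metric.mem_nhds_iff.1
    (inter_mem hs (hκ (Metric.closedBall_mem_nhds _ hε)))
  filter_upwards [Metric.ball_mem_nhds u hδ] with v hv
  have huv : uIcc u v ⊆ Metric.ball u δ :=
    (convex_ball u δ).ordConnected.uIcc_subset (Metric.mem_ball_self hδ) hv
  have hαi : IntervalIntegrable α volume u v :=
    intervalIntegrable_of_locallyIntegrableOn hα fun t ht => (hball (huv ht)).1
  have hακi : IntervalIntegrable (fun t => α t * κ t) volume u v :=
    intervalIntegrable_of_locallyIntegrableOn hακ fun t ht => (hball (huv ht)).1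
  calc ‖(∫ t in u..v, α t * κ t) - κ u * ∫ t in u..v, α t‖
      = ‖∫ t in u..v, α t * κ t - κ u * α t‖ := by
        rw [intervalIntegral.integral_sub hακi (hαi.const_mul _),
          intervalIntegral.integral_const_mul]
    _ ≤ |∫ t in u..v, ε * α t| := by
        refine intervalIntegral.norm_integral_le_abs_of_norm_le ?_ (hαi.const_mul ε)
        refine (ae_restrict_iff' measurableSet_uIoc).2 (.of_forall fun t ht => ?_)
        obtain ⟨hts, htκ⟩ := hball (huv (uIoc_subset_uIcc ht))
        have hdist : ‖κ t - κ u‖ ≤ ε := by simpa [dist_eq_norm] using htκ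
        rw [show α t * κ t - κ u * α t = (κ t - κ u) * α t by ring, norm_mul,
          Real.norm_of_nonneg (hα0 t hts)]
        exact mul_le_mul_of_nonneg_right hdist (hα0 t hts)
    _ = ε * ‖∫ t in u..v, α t‖ := by
        rw [intervalIntegral.integral_const_mul, abs_mul, abs_of_pos hε, Real.norm_eq_abs]

lemma hasDerivAt_iff_isEquivalent {f : ℝ → ℝ} {d x : ℝ} (hd : d ≠ 0) :
    HasDerivAt f d x ↔ (fun y => f y - f x) ~[𝓝 x] fun y => d * (y - x) := by
  rw [hasDerivAt_iff_isLittleO, IsEquivalent, isLittleO_const_mul_right_iff hd]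
  simp only [smul_eq_mul, mul_comm d]
  rfl

lemma hasDerivAt_iff_of_isEquivalent {f g : ℝ → ℝ} {c d x : ℝ} (hc : c ≠ 0) (hd : d ≠ 0)
    (hfg : (fun y => g y - g x) ~[𝓝 x] fun y => c * (f y - f x)) :
    HasDerivAt f d x ↔ HasDerivAt g (c * d) x := by
  rw [hasDerivAt_iff_isEquivalent hd, hasDerivAt_iff_isEquivalent (mul_ne_zero hc hd)]
  have hconst (k : ℝ) : (fun _ : ℝ => k) ~[𝓝 x] fun _ => k := IsEquivalent.refl
  constructor
  · intro h
    refine hfg.trans (((hconst c).mul h).congr_right (.of_forall fun y => ?_))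
    simp only [Pi.mul_apply, mul_assoc]
  · intro h
    refine (((hconst c⁻¹).mul (hfg.symm.trans h)).congr_right (.of_forall fun y => ?_)).congr_left
      (.of_forall fun y => ?_)
    · simp only [Pi.mul_apply, mul_assoc, inv_mul_cancel_left₀ hc]
    · simp only [Pi.mul_apply, inv_mul_cancel_left₀ hc]

lemma hasDerivAt_of_sub_eq_intervalIntegral {E : Type*} [NormedAddCommGroup E] [NormedSpace ℝ E]
    [CompleteSpace E] {g h : ℝ → E} (hh : Continuous h)
    (hg : ∀ x y, g y - g x = ∫ t in x..y, h t) (x : ℝ) : HasDerivAt g (h x) x := by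
  have hgx : g = fun y => g x + ∫ t in x..y, h t := funext fun y => by
    rw [← hg, add_sub_cancel]
  rw [hgx]
  exact (hh.integral_hasStrictDerivAt x x).hasDerivAt.const_add _

end LocalAsymptotics

section Coefficients

open Asymptotics

variable {a b f F : ℝ → ℝ} {u v x : ℝ}

lemma continuousOn_primitive (hf : IntervalIntegrable f volume 0 1) :
    ContinuousOn (primitive f) (Icc 0 1) := by
  rw [← uIcc_of_le zero_le_one]
  exact intervalIntegral.continuousOn_primitive_interval' hf left_mem_uIcc

lemma primitive_sub_primitive (hf : IntervalIntegrable f volume 0 1) (hu : u ∈ Icc (0 : ℝ) 1)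
    (hv : v ∈ Icc (0 : ℝ) 1) : primitive f v - primitive f u = ∫ t in u..v, f t := by
  rw [← uIcc_of_le zero_le_one] at hu hv
  exact intervalIntegral.integral_interval_sub_left (hf.mono_set (uIcc_subset_uIcc_left hv))
    (hf.mono_set (uIcc_subset_uIcc_left hu))

lemma primitive_zero (f : ℝ → ℝ) : primitive f 0 = 0 := intervalIntegral.integral_same

/-- The density `a / (2B)` of `Ψ`. -/
def psiDensity (a b : ℝ → ℝ) (u : ℝ) : ℝ := a u / (2 * primitive b u)

lemma locallyIntegrableOn_psiDensity (ha : IntervalIntegrable a volume 0 1)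
    (hb : IntervalIntegrable b volume 0 1) (hB : ∀ u ∈ Ioo (0 : ℝ) 1, primitive b u ≠ 0) :
    LocallyIntegrableOn (psiDensity a b) (Ioo 0 1) := by
  have haI : IntegrableOn a (Ioo 0 1) :=
    (intervalIntegrable_iff_integrableOn_Ioo_of_le zero_le_one).1 ha
  have hBc : ContinuousOn (primitive b) (Ioo 0 1) :=
    (continuousOn_primitive hb).mono Ioo_subset_Icc_self
  exact haI.locallyIntegrableOn.mul_continuousOn
    ((continuousOn_const.mul hBc).inv₀ fun u hu => mul_ne_zero two_ne_zero (hB u hu))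
    isOpen_Ioo.isLocallyClosed

lemma psiDensity_nonneg (ha0 : ∀ u ∈ Ioo (0 : ℝ) 1, 0 ≤ a u)
    (hB : ∀ u ∈ Ioo (0 : ℝ) 1, 0 < primitive b u) (hu : u ∈ Ioo (0 : ℝ) 1) :
    0 ≤ psiDensity a b u :=
  div_nonneg (ha0 u hu) (mul_pos two_pos (hB u hu)).le

lemma half_mem_Ioo : (1 / 2 : ℝ) ∈ Ioo (0 : ℝ) 1 := by norm_num

lemma intervalIntegrable_psiDensity (hψ : LocallyIntegrableOn (psiDensity a b) (Ioo 0 1))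
    (hu : u ∈ Ioo (0 : ℝ) 1) (hv : v ∈ Ioo (0 : ℝ) 1) :
    IntervalIntegrable (psiDensity a b) volume u v :=
  intervalIntegrable_of_locallyIntegrableOn hψ (ordConnected_Ioo.uIcc_subset hu hv)

lemma Psi_sub_Psi (hψ : LocallyIntegrableOn (psiDensity a b) (Ioo 0 1))
    (hu : u ∈ Ioo (0 : ℝ) 1) (hv : v ∈ Ioo (0 : ℝ) 1) :
    Psi a b v - Psi a b u = ∫ t in u..v, psiDensity a b t :=
  intervalIntegral.integral_interval_sub_left (intervalIntegrable_psiDensity hψ half_mem_Ioo hv)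
    (intervalIntegrable_psiDensity hψ half_mem_Ioo hu)

lemma continuousOn_Psi (hψ : LocallyIntegrableOn (psiDensity a b) (Ioo 0 1)) :
    ContinuousOn (Psi a b) (Ioo 0 1) := by
  intro u hu
  obtain ⟨c, hc0, hcu⟩ := exists_between hu.1
  obtain ⟨d, hud, hd1⟩ := exists_between hu.2
  have hcd : uIcc c d ⊆ Ioo 0 1 :=
    ordConnected_Ioo.uIcc_subset ⟨hc0, hcu.trans hu.2⟩ ⟨hu.1.trans hud, hd1⟩
  have hnhds : uIcc c d ∈ 𝓝 u := by
    rw [uIcc_of_le (hcu.trans hud).le]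
    exact Icc_mem_nhds hcu hud
  have hcont : ContinuousAt (fun v => Psi a b c + ∫ t in c..v, psiDensity a b t) u :=
    ((intervalIntegral.continuousOn_primitive_interval'
      (intervalIntegrable_of_locallyIntegrableOn hψ hcd) left_mem_uIcc).continuousAt
        hnhds).const_add _
  refine (hcont.congr ?_).continuousWithinAt
  filter_upwards [hnhds] with v hv
  rw [← Psi_sub_Psi hψ (hcd left_mem_uIcc) (hcd hv), add_sub_cancel]

lemma strictMonoOn_Psi (ha : IntervalIntegrable a volume 0 1)
    (ha0 : ∀ u ∈ Ioo (0 : ℝ) 1, 0 ≤ a u) (hA : StrictMonoOn (primitive a) (Ioo 0 1))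
    (hB : ∀ u ∈ Ioo (0 : ℝ) 1, 0 < primitive b u)
    (hψ : LocallyIntegrableOn (psiDensity a b) (Ioo 0 1)) :
    StrictMonoOn (Psi a b) (Ioo 0 1) := by
  intro u hu v hv huv
  have hsub : uIoc u v ⊆ Ioo 0 1 := uIoc_subset_uIcc.trans (ordConnected_Ioo.uIcc_subset hu hv)
  have hnonneg {f : ℝ → ℝ} (hf : ∀ t ∈ Ioo (0 : ℝ) 1, 0 ≤ f t) :
      0 ≤ᵐ[volume.restrict (uIoc u v)] f :=
    (ae_restrict_iff' measurableSet_uIoc).2 (.of_forall fun t ht => hf t (hsub ht))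
  have hai : IntervalIntegrable a volume u v := ha.mono_set (by
    rw [uIcc_of_le zero_le_one]
    exact (ordConnected_Ioo.uIcc_subset hu hv).trans Ioo_subset_Icc_self)
  have hapos : 0 < ∫ t in u..v, a t := by
    rw [← primitive_sub_primitive ha (Ioo_subset_Icc_self hu) (Ioo_subset_Icc_self hv)]
    exact sub_pos.2 (hA hu hv huv)
  rw [← sub_pos, Psi_sub_Psi hψ hu hv, intervalIntegral.integral_pos_iff_support_of_nonneg_ae'
    (hnonneg fun t ht => psiDensity_nonneg ha0 hB ht) (intervalIntegrable_psiDensity hψ hu hv)]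
  rw [intervalIntegral.integral_pos_iff_support_of_nonneg_ae' (hnonneg ha0) hai] at hapos
  refine ⟨huv, hapos.2.trans_le (measure_mono fun t ht => ⟨?_, ht.2⟩)⟩
  have htB := hB t (hsub (uIoc_of_le huv.le ▸ ht.2))
  exact div_ne_zero ht.1 (mul_pos two_pos htB).ne'

/- As `a` need not be continuous, `primitive a` and `Psi a b` need not be differentiable at `u`:
only the ratio of their increments is controlled. -/
lemma primitive_sub_isEquivalent_Psi_sub (ha : IntervalIntegrable a volume 0 1)
    (hb : IntervalIntegrable b volume 0 1) (ha0 : ∀ u ∈ Ioo (0 : ℝ) 1, 0 ≤ a u)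
    (hB : ∀ u ∈ Ioo (0 : ℝ) 1, 0 < primitive b u) (hu : u ∈ Ioo (0 : ℝ) 1) :
    (fun v => primitive a v - primitive a u) ~[𝓝 u]
      fun v => 2 * primitive b u * (Psi a b v - Psi a b u) := by
  have hψ := locallyIntegrableOn_psiDensity ha hb fun u hu => (hB u hu).ne'
  have hBc : ContinuousOn (fun v => 2 * primitive b v) (Ioo 0 1) :=
    continuousOn_const.mul ((continuousOn_primitive hb).mono Ioo_subset_Icc_self)
  have hlittle := isLittleO_integral_mul_sub (Ioo_mem_nhds hu.1 hu.2) hψ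
    (fun v hv => psiDensity_nonneg ha0 hB hv)
    (hψ.mul_continuousOn hBc isOpen_Ioo.isLocallyClosed)
    (hBc.continuousAt (Ioo_mem_nhds hu.1 hu.2))
  rw [IsEquivalent, isLittleO_const_mul_right_iff (mul_pos two_pos (hB u hu)).ne']
  refine hlittle.congr' ?_ ?_ <;> filter_upwards [Ioo_mem_nhds hu.1 hu.2] with v hv
  · have ha_eq : ∫ t in u..v, psiDensity a b t * (2 * primitive b t) = ∫ t in u..v, a t :=
      intervalIntegral.integral_congr fun t ht => div_mul_cancel₀ _
        (mul_pos two_pos (hB t (ordConnected_Ioo.uIcc_subset hu hv ht))).ne'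
    rw [ha_eq, ← primitive_sub_primitive ha (Ioo_subset_Icc_self hu) (Ioo_subset_Icc_self hv),
      ← Psi_sub_Psi hψ hu hv]
    rfl
  · exact (Psi_sub_Psi hψ hu hv).symm

lemma hasDerivAt_Psi_comp_iff (ha : IntervalIntegrable a volume 0 1)
    (hb : IntervalIntegrable b volume 0 1) (ha0 : ∀ u ∈ Ioo (0 : ℝ) 1, 0 ≤ a u)
    (hB : ∀ u ∈ Ioo (0 : ℝ) 1, 0 < primitive b u) (hF : ContinuousAt F x)
    (hx : F x ∈ Ioo (0 : ℝ) 1) :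
    HasDerivAt (Psi a b ∘ F) 1 x ↔ HasDerivAt (primitive a ∘ F) (2 * primitive b (F x)) x := by
  have hBx := (mul_pos two_pos (hB _ hx)).ne'
  rw [hasDerivAt_iff_of_isEquivalent hBx one_ne_zero, mul_one]
  exact (primitive_sub_isEquivalent_Psi_sub ha hb ha0 hB hx).comp_tendsto hF

end Coefficients

section Uniqueness

variable {a b A B F : ℝ → ℝ} {u x y : ℝ}

lemma continuous_of_continuous_comp_of_injOn {X Y Z : Type*} [TopologicalSpace X]
    [TopologicalSpace Y] [TopologicalSpace Z] [T2Space Z] {K : Set Y} {A : Y → Z} {F : X → Y}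
    (hK : IsCompact K) (hA : ContinuousOn A K) (hinj : InjOn A K) (hF : ∀ x, F x ∈ K)
    (hAF : Continuous (A ∘ F)) : Continuous F := by
  have := isCompact_iff_compactSpace.1 hK
  have hemb := (continuousOn_iff_continuous_domRestrict.1 hA).isClosedEmbedding
    (injOn_iff_injective.1 hinj)
  exact continuous_subtype_val.comp
    (hemb.isEmbedding.continuous_iff.2 hAF : Continuous (codRestrict F K hF))

lemma IsCDF.apply_pinv (hF : IsCDF F) (hFc : Continuous F) (hu : u ∈ Ioo (0 : ℝ) 1) :
    F (pinv F u) = u := by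
  have hopen : IsOpen {x | u < F x} := isOpen_lt continuous_const hFc
  have hne : {x | u < F x}.Nonempty := (hF.2.2.2.eventually (lt_mem_nhds hu.2)).exists
  obtain ⟨m, hm⟩ := (hF.2.2.1.eventually (gt_mem_nhds hu.1)).exists
  have hbdd : BddBelow {x | u < F x} := ⟨m, fun x hx => (hF.1.reflect_lt (hm.trans hx)).le⟩
  refine le_antisymm (not_lt.1 fun h => ?_) ?_
  · obtain ⟨y, hy, hyp⟩ := Filter.nonempty_of_mem
      (inter_mem (mem_nhdsWithin_of_mem_nhds (hopen.mem_nhds h)) self_mem_nhdsWithin :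
        {x | u < F x} ∩ Iio (pinv F u) ∈ 𝓝[<] pinv F u)
    exact (csInf_le hbdd hy).not_gt hyp
  · have hle : {x | u < F x} ⊆ {x | u ≤ F x} := fun x (hx : u < F x) => hx.le
    have hmem : pinv F u ∈ closure {x | u < F x} := csInf_mem_closure hne hbdd
    exact closure_minimal hle (isClosed_le continuous_const hFc) hmem

lemma IsCDF.continuous_of_isStationarySolution (hF : IsCDF F) (hA : ContinuousOn A (Icc 0 1))
    (hB : ContinuousOn B (Icc 0 1)) (hB0 : B 0 = 0) (hinj : InjOn A (Icc 0 1))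
    (hsol : IsStationarySolution A B F) : Continuous F := by
  have hBF : LocallyIntegrable fun x => 2 * B (F x) := (hF.locallyIntegrable_comp hB).smul (2 : ℝ)
  have hprim : Continuous fun x => ∫ t in (0 : ℝ)..x, 2 * B (F t) :=
    intervalIntegral.continuous_primitive (fun x y =>
      (hBF.integrableOn_isCompact isCompact_uIcc).intervalIntegrable) 0
  refine continuous_of_continuous_comp_of_injOn isCompact_Icc hA hinj hF.mem_Icc
    ((hprim.add_const (A (F 0))).congr fun x => ?_)
  rw [← (hF.isStationarySolution_iff hA hB hB0).1 hsol 0 x, sub_add_cancel, Function.comp_apply]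

lemma IsCDF.Psi_comp_sub_of_isStationarySolution (hF : IsCDF F)
    (ha : IntervalIntegrable a volume 0 1) (hb : IntervalIntegrable b volume 0 1)
    (ha0 : ∀ u ∈ Ioo (0 : ℝ) 1, 0 ≤ a u) (hA : InjOn (primitive a) (Icc 0 1))
    (hB : ∀ u ∈ Ioo (0 : ℝ) 1, 0 < primitive b u)
    (hsol : IsStationarySolution (primitive a) (primitive b) F)
    (hx : F x ∈ Ioo (0 : ℝ) 1) (hy : F y ∈ Ioo (0 : ℝ) 1) :
    Psi a b (F y) - Psi a b (F x) = y - x := by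
  have hAc := continuousOn_primitive ha
  have hBc := continuousOn_primitive hb
  have hFc := hF.continuous_of_isStationarySolution hAc hBc (primitive_zero b) hA hsol
  have hderiv : ∀ t ∈ uIcc x y, HasDerivAt (Psi a b ∘ F) 1 t := by
    intro t ht
    have hFt : F t ∈ Ioo (0 : ℝ) 1 :=
      (ordConnected_Ioo.preimage_mono hF.1).uIcc_subset hx hy ht
    exact (hasDerivAt_Psi_comp_iff ha hb ha0 hB hFc.continuousAt hFt).2 <|
      hasDerivAt_of_sub_eq_intervalIntegral
        (continuous_const.mul (hBc.comp_continuous hFc hF.mem_Icc))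
        ((hF.isStationarySolution_iff hAc hBc (primitive_zero b)).1 hsol) t
  have hslope := intervalIntegral.integral_eq_sub_of_hasDerivAt hderiv intervalIntegrable_const
  simpa using hslope.symm

lemma IsCDF.pinv_eq_Psi_add_of_isStationarySolution (hF : IsCDF F)
    (ha : IntervalIntegrable a volume 0 1) (hb : IntervalIntegrable b volume 0 1)
    (ha0 : ∀ u ∈ Ioo (0 : ℝ) 1, 0 ≤ a u) (hA : InjOn (primitive a) (Icc 0 1))
    (hB : ∀ u ∈ Ioo (0 : ℝ) 1, 0 < primitive b u)
    (hsol : IsStationarySolution (primitive a) (primitive b) F) (hu : u ∈ Ioo (0 : ℝ) 1) :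
    pinv F u = Psi a b u + pinv F (1 / 2) := by
  have hFc := hF.continuous_of_isStationarySolution (continuousOn_primitive ha)
    (continuousOn_primitive hb) (primitive_zero b) hA hsol
  have hFu := hF.apply_pinv hFc hu
  have hFhalf := hF.apply_pinv hFc half_mem_Ioo
  have hslope := hF.Psi_comp_sub_of_isStationarySolution ha hb ha0 hA hB hsol
    (hFhalf.symm ▸ half_mem_Ioo) (hFu.symm ▸ hu)
  have hPsi : Psi a b (1 / 2) = 0 := intervalIntegral.integral_same
  rw [hFu, hFhalf, hPsi] at hslope
  linarith

end Uniqueness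

section Existence

/-- The cumulative distribution function with quantile function `P` on `(0, 1)`. It takes the
value `0` below the range of `P`, since then it is `sSup ∅ = 0`. By definition, `PsiInv a b` is
`cdfOfQuantile (Psi a b)`. -/
def cdfOfQuantile (P : ℝ → ℝ) (x : ℝ) : ℝ := sSup {u | u ∈ Ioo (0 : ℝ) 1 ∧ P u ≤ x}

namespace cdfOfQuantile

variable {P : ℝ → ℝ} {l : Filter ℝ} {q u x : ℝ}

lemma mem_Icc (P : ℝ → ℝ) (x : ℝ) : cdfOfQuantile P x ∈ Icc (0 : ℝ) 1 :=
  ⟨Real.sSup_nonneg fun _ hu => hu.1.1.le, Real.sSup_le (fun _ hu => hu.1.2.le) zero_le_one⟩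

lemma le_of_apply_le (hu : u ∈ Ioo (0 : ℝ) 1) (h : P u ≤ x) : u ≤ cdfOfQuantile P x :=
  le_csSup ⟨1, fun _ hv => hv.1.2.le⟩ ⟨hu, h⟩

lemma monotone (P : ℝ → ℝ) : Monotone (cdfOfQuantile P) := fun _ y hxy =>
  Real.sSup_le (fun _ hu => le_of_apply_le hu.1 (hu.2.trans hxy)) (mem_Icc P y).1

lemma lt_iff (hP : StrictMonoOn P (Ioo 0 1)) (hPc : ContinuousOn P (Ioo 0 1))
    (hu : u ∈ Ioo (0 : ℝ) 1) : u < cdfOfQuantile P x ↔ P u < x := by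
  constructor
  · intro h
    have hne : {v | v ∈ Ioo (0 : ℝ) 1 ∧ P v ≤ x}.Nonempty := by
      by_contra hempty
      rw [cdfOfQuantile, not_nonempty_iff_eq_empty.1 hempty, Real.sSup_empty] at h
      exact h.not_gt hu.1
    obtain ⟨v, hv, huv⟩ := exists_lt_of_lt_csSup hne h
    exact (hP hu hv.1 huv).trans_le hv.2
  · intro h
    have hnear : ∀ᶠ v in 𝓝[>] u, v ∈ Ioo (0 : ℝ) 1 ∧ P v < x :=
      nhdsWithin_le_nhds ((isOpen_Ioo.eventually_mem hu).and
        ((hPc.continuousAt (Ioo_mem_nhds hu.1 hu.2)).eventually_lt_const h))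
    obtain ⟨v, ⟨hv, hvx⟩, huv⟩ := (hnear.and self_mem_nhdsWithin).exists
    exact lt_of_lt_of_le huv (le_of_apply_le hv hvx.le)

lemma lt_iff_lt_apply (hP : StrictMonoOn P (Ioo 0 1)) (hPc : ContinuousOn P (Ioo 0 1))
    (hu : u ∈ Ioo (0 : ℝ) 1) : cdfOfQuantile P x < u ↔ x < P u := by
  refine ⟨fun h => not_le.1 fun hle => (le_of_apply_le hu hle).not_gt h, fun h => ?_⟩
  have hnear : ∀ᶠ v in 𝓝[<] u, v ∈ Ioo (0 : ℝ) 1 ∧ x < P v :=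
    nhdsWithin_le_nhds ((isOpen_Ioo.eventually_mem hu).and
      ((hPc.continuousAt (Ioo_mem_nhds hu.1 hu.2)).eventually_const_lt h))
  obtain ⟨v, ⟨hv, hxv⟩, hvu⟩ := (hnear.and self_mem_nhdsWithin).exists
  have hle : cdfOfQuantile P x ≤ v := Real.sSup_le
    (fun w hw => ((hP.lt_iff_lt hw.1 hv).1 (hw.2.trans_lt hxv)).le) hv.1.le
  exact hle.trans_lt hvu

lemma apply_self (hP : StrictMonoOn P (Ioo 0 1)) (hPc : ContinuousOn P (Ioo 0 1))
    (hx : cdfOfQuantile P x ∈ Ioo (0 : ℝ) 1) : P (cdfOfQuantile P x) = x :=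
  le_antisymm (not_lt.1 fun h => lt_irrefl _ ((lt_iff_lt_apply hP hPc hx).2 h))
    (not_lt.1 fun h => lt_irrefl _ ((lt_iff hP hPc hx).2 h))

lemma tendsto (hP : StrictMonoOn P (Ioo 0 1)) (hPc : ContinuousOn P (Ioo 0 1))
    (hq : q ∈ Icc (0 : ℝ) 1) (hlower : ∀ u ∈ Ioo 0 q, ∀ᶠ x in l, P u < x)
    (hupper : ∀ u ∈ Ioo q 1, ∀ᶠ x in l, x < P u) : Tendsto (cdfOfQuantile P) l (𝓝 q) := by
  refine tendsto_order.2 ⟨fun u hu => ?_, fun u hu => ?_⟩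
  · rcases lt_or_ge u 0 with hu0 | hu0
    · exact .of_forall fun x => hu0.trans_le (mem_Icc P x).1
    obtain ⟨v, huv, hvq⟩ := exists_between hu
    have hv := hu0.trans_lt huv
    filter_upwards [hlower v ⟨hv, hvq⟩] with x hx
    exact huv.trans ((lt_iff hP hPc ⟨hv, hvq.trans_le hq.2⟩).2 hx)
  · rcases lt_or_ge 1 u with hu1 | hu1
    · exact .of_forall fun x => (mem_Icc P x).2.trans_lt hu1
    obtain ⟨v, hqv, hvu⟩ := exists_between hu
    have hv := hvu.trans_le hu1
    filter_upwards [hupper v ⟨hqv, hv⟩] with x hx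
    exact ((lt_iff_lt_apply hP hPc ⟨hq.1.trans_lt hqv, hv⟩).2 hx).trans hvu

lemma continuous (hP : StrictMonoOn P (Ioo 0 1)) (hPc : ContinuousOn P (Ioo 0 1)) :
    Continuous (cdfOfQuantile P) := by
  refine continuous_iff_continuousAt.2 fun x => tendsto hP hPc (mem_Icc P x) ?_ ?_
  · exact fun u hu => lt_mem_nhds ((lt_iff hP hPc ⟨hu.1, hu.2.trans_le (mem_Icc P x).2⟩).1 hu.2)
  · exact fun u hu => gt_mem_nhds
      ((lt_iff_lt_apply hP hPc ⟨(mem_Icc P x).1.trans_lt hu.1, hu.2⟩).1 hu.1)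

lemma isCDF (hP : StrictMonoOn P (Ioo 0 1)) (hPc : ContinuousOn P (Ioo 0 1)) :
    IsCDF (cdfOfQuantile P) := by
  refine ⟨monotone P, fun x => (continuous hP hPc).continuousWithinAt, ?_, ?_⟩
  · exact tendsto hP hPc (left_mem_Icc.2 zero_le_one) (by simp)
      fun u _ => eventually_lt_atBot (P u)
  · exact tendsto hP hPc (right_mem_Icc.2 zero_le_one) (fun u _ => eventually_gt_atTop (P u))
      (by simp)

lemma pinv_eq (hP : StrictMonoOn P (Ioo 0 1)) (hPc : ContinuousOn P (Ioo 0 1))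
    (hu : u ∈ Ioo (0 : ℝ) 1) : pinv (cdfOfQuantile P) u = P u := by
  simp only [pinv, lt_iff hP hPc hu]
  exact csInf_Ioi

end cdfOfQuantile

lemma subsingleton_frontier_of_isLowerSet {α : Type*} [LinearOrder α] [TopologicalSpace α]
    [OrderTopology α] {s : Set α} (hs : IsLowerSet s) : (frontier s).Subsingleton := by
  have hle {x y : α} (hx : x ∈ frontier s) (hy : y ∈ frontier s) : y ≤ x := by
    refine not_lt.1 fun hxy => hx.2 ?_
    obtain ⟨z, hxz, hz⟩ := mem_closure_iff.1 hy.1 _ isOpen_Ioi hxy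
    exact mem_interior.2 ⟨Iio z, fun w hw => hs (le_of_lt hw) hz, isOpen_Iio, hxz⟩
  exact fun x hx y hy => le_antisymm (hle hy hx) (hle hx hy)

lemma subsingleton_frontier_of_isUpperSet {α : Type*} [LinearOrder α] [TopologicalSpace α]
    [OrderTopology α] {s : Set α} (hs : IsUpperSet s) : (frontier s).Subsingleton :=
  frontier_compl s ▸ subsingleton_frontier_of_isLowerSet hs.compl

variable {a b F : ℝ → ℝ} {x : ℝ}

lemma IsCDF.countable_frontier_preimage (hF : IsCDF F) :
    (frontier (F ⁻¹' {0}) ∪ frontier (F ⁻¹' {1})).Countable := by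
  have hlower : IsLowerSet (F ⁻¹' {0}) := fun x y hyx hx =>
    le_antisymm ((hF.1 hyx).trans_eq hx) (hF.mem_Icc y).1
  have hupper : IsUpperSet (F ⁻¹' {1}) := fun x y hxy hx =>
    le_antisymm (hF.mem_Icc y).2 (hx.symm.trans_le (hF.1 hxy))
  exact (subsingleton_frontier_of_isLowerSet hlower).countable.union
    (subsingleton_frontier_of_isUpperSet hupper).countable

lemma IsCDF.hasDerivAt_primitive_comp (hF : IsCDF F) (hFc : Continuous F)
    (ha : IntervalIntegrable a volume 0 1) (hb : IntervalIntegrable b volume 0 1)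
    (ha0 : ∀ u ∈ Ioo (0 : ℝ) 1, 0 ≤ a u) (hB : ∀ u ∈ Ioo (0 : ℝ) 1, 0 < primitive b u)
    (hB1 : primitive b 1 = 0) (hinv : ∀ x, F x ∈ Ioo (0 : ℝ) 1 → Psi a b (F x) = x)
    (hx : x ∉ frontier (F ⁻¹' {0}) ∪ frontier (F ⁻¹' {1})) :
    HasDerivAt (primitive a ∘ F) (2 * primitive b (F x)) x := by
  have hplateau {c : ℝ} (hc : x ∉ frontier (F ⁻¹' {c})) (hBc : primitive b c = 0)
      (hxc : F x = c) : HasDerivAt (primitive a ∘ F) (2 * primitive b (F x)) x := by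
    rw [hxc, hBc, mul_zero]
    have hnhds : F ⁻¹' {c} ∈ 𝓝 x := by
      by_contra h
      exact hc ⟨subset_closure hxc, fun hmem => h (mem_interior_iff_mem_nhds.1 hmem)⟩
    refine (hasDerivAt_const x (primitive a c)).congr_of_eventuallyEq ?_
    filter_upwards [hnhds] with y hy
    exact congrArg (primitive a) hy
  rcases (hF.mem_Icc x).1.eq_or_lt with h0 | h0
  · exact hplateau (fun h => hx (.inl h)) (primitive_zero b) h0.symm
  rcases (hF.mem_Icc x).2.eq_or_lt with h1 | h1
  · exact hplateau (fun h => hx (.inr h)) hB1 h1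
  refine (hasDerivAt_Psi_comp_iff ha hb ha0 hB hFc.continuousAt ⟨h0, h1⟩).1 ?_
  refine (hasDerivAt_id x).congr_of_eventuallyEq ?_
  filter_upwards [hFc.continuousAt (Ioo_mem_nhds h0 h1)] with y hy
  exact hinv y hy

lemma IsCDF.isStationarySolution_of_Psi_comp_eq (hF : IsCDF F) (hFc : Continuous F)
    (ha : IntervalIntegrable a volume 0 1) (hb : IntervalIntegrable b volume 0 1)
    (ha0 : ∀ u ∈ Ioo (0 : ℝ) 1, 0 ≤ a u) (hB : ∀ u ∈ Ioo (0 : ℝ) 1, 0 < primitive b u)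
    (hB1 : primitive b 1 = 0) (hinv : ∀ x, F x ∈ Ioo (0 : ℝ) 1 → Psi a b (F x) = x) :
    IsStationarySolution (primitive a) (primitive b) F := by
  have hAc := continuousOn_primitive ha
  have hBc := continuousOn_primitive hb
  refine (hF.isStationarySolution_iff hAc hBc (primitive_zero b)).2 fun x y => ?_
  refine (integral_eq_of_hasDerivAt_off_countable _ _ hF.countable_frontier_preimage
    (hAc.comp_continuous hFc hF.mem_Icc).continuousOn (fun t ht => ?_) ?_).symm
  · exact hF.hasDerivAt_primitive_comp hFc ha hb ha0 hB hB1 hinv ht.2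
  · exact (continuous_const.mul (hBc.comp_continuous hFc hF.mem_Icc)).intervalIntegrable x y

end Existence

section Moment

variable {g : ℝ → ℝ} {c d m : ℝ}

lemma ofReal_abs_intervalIntegral_eq_lintegral {x y : ℝ} (hg : IntervalIntegrable g volume x y)
    (hg0 : ∀ s ∈ uIoc x y, 0 ≤ g s) :
    ENNReal.ofReal |∫ s in x..y, g s| = ∫⁻ s in uIoc x y, ENNReal.ofReal (g s) := by
  rw [intervalIntegral.abs_integral_eq_abs_integral_uIoc,
    abs_of_nonneg (setIntegral_nonneg measurableSet_uIoc hg0),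
    ofReal_integral_eq_lintegral_ofReal hg.def'
      ((ae_restrict_iff' measurableSet_uIoc).2 (.of_forall hg0))]

lemma measurableSet_mem_uIoc (m : ℝ) : MeasurableSet {p : ℝ × ℝ | p.2 ∈ uIoc m p.1} :=
  (measurableSet_lt (measurable_const.min measurable_fst) measurable_snd).inter
    (measurableSet_le measurable_snd (measurable_const.max measurable_fst))

lemma lintegral_lintegral_uIoc {w : ℝ → ℝ≥0∞} {s : Set ℝ} (hs : s.OrdConnected) (hm : m ∈ s)
    (hw : AEMeasurable w (volume.restrict s)) :
    ∫⁻ u in s, ∫⁻ v in uIoc m u, w v = ∫⁻ v in s, w v * volume ({u | v ∈ uIoc m u} ∩ s) := by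
  have hmeas : AEMeasurable (fun p : ℝ × ℝ => {p | p.2 ∈ uIoc m p.1}.indicator (fun p => w p.2) p)
      ((volume.restrict s).prod (volume.restrict s)) :=
    hw.comp_snd.indicator (measurableSet_mem_uIoc m)
  calc ∫⁻ u in s, ∫⁻ v in uIoc m u, w v
      = ∫⁻ u in s, ∫⁻ v in s, {u | v ∈ uIoc m u}.indicator (fun _ => w v) u := by
        refine setLIntegral_congr_fun hs.measurableSet fun u hu => ?_
        rw [← inter_eq_left.2 (uIoc_subset_uIcc.trans (hs.uIcc_subset hm hu)),
          ← setLIntegral_indicator measurableSet_uIoc]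
        rfl
    _ = ∫⁻ v in s, ∫⁻ u in s, {u | v ∈ uIoc m u}.indicator (fun _ => w v) u :=
        lintegral_lintegral_swap hmeas
    _ = ∫⁻ v in s, w v * volume ({u | v ∈ uIoc m u} ∩ s) := by
        refine lintegral_congr fun v => ?_
        have hv : MeasurableSet {u | v ∈ uIoc m u} :=
          measurable_prodMk_right (measurableSet_mem_uIoc m)
        rw [lintegral_indicator_const hv, Measure.restrict_apply hv]

lemma lintegral_ofReal_abs_intervalIntegral (hm : m ∈ Ioo c d)
    (hg : LocallyIntegrableOn g (Ioo c d)) (hg0 : ∀ u ∈ Ioo c d, 0 ≤ g u) :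
    ∫⁻ u in Ioo c d, ENNReal.ofReal |∫ s in m..u, g s| =
      (∫⁻ u in Ioo c m, ENNReal.ofReal (g u * (u - c))) +
        ∫⁻ u in Ioo m d, ENNReal.ofReal (g u * (d - u)) := by
  have hsub {u : ℝ} (hu : u ∈ Ioo c d) : uIcc m u ⊆ Ioo c d := ordConnected_Ioo.uIcc_subset hm hu
  have hleft {v : ℝ} (hv : v ∈ Ioc c m) : {u | v ∈ uIoc m u} ∩ Ioo c d = Ioo c v := by
    ext u
    simp only [uIoc, mem_inter_iff, mem_Ioc, mem_Ioo, mem_ofPred_eq]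
    grind
  have hright {v : ℝ} (hv : v ∈ Ioo m d) : {u | v ∈ uIoc m u} ∩ Ioo c d = Ico v d := by
    ext u
    simp only [uIoc, mem_inter_iff, mem_Ioc, mem_Ioo, mem_Ico, mem_ofPred_eq]
    grind
  calc ∫⁻ u in Ioo c d, ENNReal.ofReal |∫ s in m..u, g s|
      = ∫⁻ u in Ioo c d, ∫⁻ v in uIoc m u, ENNReal.ofReal (g v) :=
        setLIntegral_congr_fun measurableSet_Ioo fun u hu =>
          ofReal_abs_intervalIntegral_eq_lintegral
            (intervalIntegrable_of_locallyIntegrableOn hg (hsub hu))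
            fun s hs => hg0 s (hsub hu (uIoc_subset_uIcc hs))
    _ = ∫⁻ v in Ioo c d, ENNReal.ofReal (g v) * volume ({u | v ∈ uIoc m u} ∩ Ioo c d) :=
        lintegral_lintegral_uIoc ordConnected_Ioo hm
          hg.aestronglyMeasurable.aemeasurable.ennreal_ofReal
    _ = (∫⁻ v in Ioc c m, ENNReal.ofReal (g v) * volume ({u | v ∈ uIoc m u} ∩ Ioo c d)) +
          ∫⁻ v in Ioo m d, ENNReal.ofReal (g v) * volume ({u | v ∈ uIoc m u} ∩ Ioo c d) := by
        rw [← Ioc_union_Ioo_eq_Ioo hm.1.le hm.2, lintegral_union measurableSet_Ioo]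
        exact disjoint_left.2 fun v hv hv' => hv.2.not_gt hv'.1
    _ = _ := by
        rw [← setLIntegral_congr Ioo_ae_eq_Ioc]
        congr 1 <;> refine setLIntegral_congr_fun measurableSet_Ioo fun v hv => ?_
        · rw [hleft (Ioo_subset_Ioc_self hv), Real.volume_Ioo,
            ENNReal.ofReal_mul (hg0 v ⟨hv.1, hv.2.trans hm.2⟩)]
        · rw [hright hv, Real.volume_Ico, ENNReal.ofReal_mul (hg0 v ⟨hm.1.trans hv.1, hv.2⟩)]

end Moment

section FirstMoment

variable {a b F : ℝ → ℝ}

lemma lintegral_ofReal_abs_Psi (ha0 : ∀ u ∈ Ioo (0 : ℝ) 1, 0 ≤ a u)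
    (hB : ∀ u ∈ Ioo (0 : ℝ) 1, 0 < primitive b u)
    (hψ : LocallyIntegrableOn (psiDensity a b) (Ioo 0 1)) :
    ∫⁻ u in Ioo (0 : ℝ) 1, ENNReal.ofReal |Psi a b u| =
      (∫⁻ u in Ioo (0 : ℝ) (1 / 2), ENNReal.ofReal (a u * u / (2 * |primitive b u|))) +
        ∫⁻ u in Ioo (1 / 2 : ℝ) 1, ENNReal.ofReal (a u * (1 - u) / (2 * |primitive b u|)) := by
  refine (lintegral_ofReal_abs_intervalIntegral half_mem_Ioo hψ
    fun u hu => psiDensity_nonneg ha0 hB hu).trans ?_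
  congr 1 <;> refine setLIntegral_congr_fun measurableSet_Ioo fun u hu => ?_
  · rw [abs_of_pos (hB u ⟨hu.1, hu.2.trans one_half_lt_one⟩), psiDensity, sub_zero,
      div_mul_eq_mul_div]
  · rw [abs_of_pos (hB u ⟨one_half_pos.trans hu.1, hu.2⟩), psiDensity, div_mul_eq_mul_div]

lemma IsCDF.lintegral_ofReal_abs_pinv_lt_top (hF : IsCDF F)
    (ha : IntervalIntegrable a volume 0 1) (hb : IntervalIntegrable b volume 0 1)
    (ha0 : ∀ u ∈ Ioo (0 : ℝ) 1, 0 ≤ a u) (hA : InjOn (primitive a) (Icc 0 1))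
    (hB : ∀ u ∈ Ioo (0 : ℝ) 1, 0 < primitive b u)
    (hsol : IsStationarySolution (primitive a) (primitive b) F)
    (hPsi : ∫⁻ u in Ioo (0 : ℝ) 1, ENNReal.ofReal |Psi a b u| < ⊤) :
    ∫⁻ u in Ioo (0 : ℝ) 1, ENNReal.ofReal |pinv F u| < ⊤ := by
  calc ∫⁻ u in Ioo (0 : ℝ) 1, ENNReal.ofReal |pinv F u|
      ≤ ∫⁻ u in Ioo (0 : ℝ) 1,
          (ENNReal.ofReal |Psi a b u| + ENNReal.ofReal |pinv F (1 / 2)|) := by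
        refine setLIntegral_mono' measurableSet_Ioo fun u hu => ?_
        rw [hF.pinv_eq_Psi_add_of_isStationarySolution ha hb ha0 hA hB hsol hu,
          ← ENNReal.ofReal_add (abs_nonneg _) (abs_nonneg _)]
        exact ENNReal.ofReal_le_ofReal (abs_add_le _ _)
    _ = (∫⁻ u in Ioo (0 : ℝ) 1, ENNReal.ofReal |Psi a b u|) +
          ENNReal.ofReal |pinv F (1 / 2)| := by
        rw [lintegral_add_right _ measurable_const, setLIntegral_const, Real.volume_Ioo]
        simp
    _ < ⊤ := ENNReal.add_lt_top.2 ⟨hPsi, ENNReal.ofReal_lt_top⟩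

lemma isCDF_PsiInv (hP : StrictMonoOn (Psi a b) (Ioo 0 1))
    (hPc : ContinuousOn (Psi a b) (Ioo 0 1)) : IsCDF (PsiInv a b) :=
  cdfOfQuantile.isCDF hP hPc

lemma pinv_PsiInv (hP : StrictMonoOn (Psi a b) (Ioo 0 1))
    (hPc : ContinuousOn (Psi a b) (Ioo 0 1)) {u : ℝ} (hu : u ∈ Ioo (0 : ℝ) 1) :
    pinv (PsiInv a b) u = Psi a b u :=
  cdfOfQuantile.pinv_eq hP hPc hu

lemma isStationarySolution_PsiInv (ha : IntervalIntegrable a volume 0 1)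
    (hb : IntervalIntegrable b volume 0 1) (ha0 : ∀ u ∈ Ioo (0 : ℝ) 1, 0 ≤ a u)
    (hB : ∀ u ∈ Ioo (0 : ℝ) 1, 0 < primitive b u) (hB1 : primitive b 1 = 0)
    (hP : StrictMonoOn (Psi a b) (Ioo 0 1)) (hPc : ContinuousOn (Psi a b) (Ioo 0 1)) :
    IsStationarySolution (primitive a) (primitive b) (PsiInv a b) :=
  (isCDF_PsiInv hP hPc).isStationarySolution_of_Psi_comp_eq (cdfOfQuantile.continuous hP hPc)
    ha hb ha0 hB hB1 fun _ hx => cdfOfQuantile.apply_self hP hPc hx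

end FirstMoment

theorem stationary_solution_finite_first_moment_iff_general {a b : ℝ → ℝ}
    (ha : IntervalIntegrable a volume 0 1) (hb : IntervalIntegrable b volume 0 1)
    (ha0 : ∀ u ∈ Ioo (0 : ℝ) 1, 0 ≤ a u) (hD1 : StrictMonoOn (primitive a) (Icc 0 1))
    (hE1pos : ∀ u ∈ Ioo (0 : ℝ) 1, 0 < primitive b u) (hE1B1 : primitive b 1 = 0) :
    (∀ F : ℝ → ℝ, IsCDF F → IsStationarySolution (primitive a) (primitive b) F →
        (∫⁻ u in Ioo (0 : ℝ) 1, ENNReal.ofReal |pinv F u|) < ⊤) ↔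
    ((∫⁻ u in Ioo (0 : ℝ) (1 / 2), ENNReal.ofReal (a u * u / (2 * |primitive b u|)))
      + ∫⁻ u in Ioo (1 / 2 : ℝ) 1,
          ENNReal.ofReal (a u * (1 - u) / (2 * |primitive b u|))) < ⊤ := by
  have hψ := locallyIntegrableOn_psiDensity ha hb fun u hu => (hE1pos u hu).ne'
  have hP := strictMonoOn_Psi ha ha0 (hD1.mono Ioo_subset_Icc_self) hE1pos hψ
  have hPc := continuousOn_Psi hψ
  rw [← lintegral_ofReal_abs_Psi ha0 hE1pos hψ]
  constructor
  · intro hmoment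
    refine lt_of_eq_of_lt (setLIntegral_congr_fun measurableSet_Ioo fun u hu => ?_)
      (hmoment (PsiInv a b) (isCDF_PsiInv hP hPc)
        (isStationarySolution_PsiInv ha hb ha0 hE1pos hE1B1 hP hPc))
    rw [pinv_PsiInv hP hPc hu]
  · exact fun hPsi F hF hsol =>
      hF.lintegral_ofReal_abs_pinv_lt_top ha hb ha0 hD1.injOn hE1pos hsol hPsi

/-- Under (D1) and (E1), the stationary solutions have a finite first moment if and
only if condition (E2) holds. -/
theorem stationary_solution_finite_first_moment_iff
    (a b : ℝ → ℝ)
    (ha : ContinuousOn a (Set.Icc 0 1)) (hb : ContinuousOn b (Set.Icc 0 1))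
    (ha0 : ∀ u ∈ Set.Icc (0:ℝ) 1, 0 ≤ a u)
    (hD1 : StrictMonoOn (primitive a) (Set.Icc 0 1))
    (hE1pos : ∀ u ∈ Set.Ioo (0:ℝ) 1, 0 < primitive b u)
    (hE1B1 : primitive b 1 = 0)
    (hE1loc : ∀ c d : ℝ, 0 < c → c ≤ d → d < 1 →
      IntegrableOn (fun u => a u / (2 * primitive b u)) (Set.Icc c d)) :
    (∀ F : ℝ → ℝ, IsCDF F → IsStationarySolution (primitive a) (primitive b) F →
        (∫⁻ u in Set.Ioo (0:ℝ) 1, ENNReal.ofReal |pinv F u|) < ⊤) ↔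
    ((∫⁻ u in Set.Ioo (0:ℝ) (1/2),
        ENNReal.ofReal (a u * u / (2 * |primitive b u|)))
      + ∫⁻ u in Set.Ioo (1/2:ℝ) 1,
          ENNReal.ofReal (a u * (1 - u) / (2 * |primitive b u|))) < ⊤ :=
  stationary_solution_finite_first_moment_iff_general (ha.intervalIntegrable_of_Icc zero_le_one)
    (hb.intervalIntegrable_of_Icc zero_le_one) (fun u hu => ha0 u (Ioo_subset_Icc_self hu))
    hD1 hE1pos hE1B1
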